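/- Let V be a nonempty finite set of cardinality n, f : 2^V → ℝ a normalized submodular set function, and (φ_1, …, φ_n) an enumeration (permutation) of the elements of V. Define the greedy vector r ∈ ℝ^V by r_{φ_i} = f({φ_1, …, φ_i}) − f({φ_1, …, φ_{i−1}}) for each i (with r_{φ_1} = f({φ_1})). Then r lies in the core B(f), i.e. r(X) ≤ f(X) for all X ⊆ V and r(V) = f(V). -/

import Mathlib

open Finset

/-! The greedy entry at `a` is the marginal gain of adding `a` to the set of all its predecessors.
Submodularity says that marginal gains decrease as the base set grows. Building `s` up in
increasing order, each new element is added to a set of *some* of its predecessors, so the gains,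
which telescope to `f s - f ∅`, dominate the greedy entries. When `s` is closed under predecessors,
as the whole ground set is, the two gains agree at every step. -/

/-- Submodularity of a function on a lattice, which for `Finset V` is the inequality
`f (s ∩ t) + f (s ∪ t) ≤ f s + f t`. -/
def IsSubmodular {α G : Type*} [Lattice α] [Add G] [LE G] (f : α → G) : Prop :=
  ∀ x y, f (x ⊓ y) + f (x ⊔ y) ≤ f x + f y

theorem IsSubmodular.insert_sub_le_insert_sub {V G : Type*} [DecidableEq V] [AddCommGroup G]
    [Preorder G] [IsOrderedAddMonoid G] {f : Finset V → G} (hf : IsSubmodular f)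
    {s t : Finset V} {a : V} (hst : s ⊆ t) (ha : a ∉ t) :
    f (insert a t) - f t ≤ f (insert a s) - f s := by
  have hinter : insert a s ∩ t = s := by
    rw [insert_inter_of_notMem ha, inter_eq_left.mpr hst]
  have hunion : insert a s ∪ t = insert a t := by
    rw [insert_union, union_eq_right.mpr hst]
  rw [sub_le_sub_iff, add_comm]
  simpa only [inf_eq_inter, sup_eq_union, hinter, hunion] using hf (insert a s) t

section Greedy

variable {V ι G : Type*} [Fintype V] [LinearOrder ι]

/-- The elements strictly before `a` in the enumeration encoded by `σ`, used as the base sets of the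
greedy vector. -/
def predecessors (σ : V → ι) (a : V) : Finset V := {j | σ j < σ a}

/-- Edmonds' greedy vector of the set function `f`, where an injective `σ` encodes the enumeration
of the ground set in increasing order of its values. -/
def greedyVector [Sub G] (f : Finset V → G) (σ : V → ι) (i : V) : G :=
  f {j | σ j ≤ σ i} - f (predecessors σ i)

variable {σ : V → ι}

theorem mem_predecessors {a j : V} : j ∈ predecessors σ a ↔ σ j < σ a := mem_filter_univ j

theorem subset_predecessors_of_forall_le (hσ : σ.Injective) {s : Finset V} {a : V} (ha : a ∉ s)
    (hmax : ∀ i ∈ s, σ i ≤ σ a) : s ⊆ predecessors σ a := fun i hi ↦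
  mem_predecessors.mpr <| (hmax i hi).lt_of_ne <| hσ.ne <| ne_of_mem_of_not_mem hi ha

theorem greedyVector_eq_insert_sub [DecidableEq V] [Sub G] (hσ : σ.Injective) (f : Finset V → G)
    (i : V) :
    greedyVector f σ i = f (insert i (predecessors σ i)) - f (predecessors σ i) := by
  have hinsert : ({j | σ j ≤ σ i} : Finset V) = insert i (predecessors σ i) := by
    ext j
    simp [mem_predecessors, le_iff_eq_or_lt, hσ.eq_iff]
  rw [greedyVector, hinsert]

variable [AddCommGroup G] {f : Finset V → G}

theorem sum_greedyVector_le [DecidableEq V] [Preorder G] [IsOrderedAddMonoid G]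
    (hf : IsSubmodular f) (hσ : σ.Injective) (s : Finset V) :
    ∑ i ∈ s, greedyVector f σ i ≤ f s - f ∅ := by
  induction s using induction_on_max_value σ with
  | empty => simp
  | insert a s ha hmax ih =>
    have hgain : greedyVector f σ a ≤ f (insert a s) - f s := by
      rw [greedyVector_eq_insert_sub hσ]
      exact hf.insert_sub_le_insert_sub (subset_predecessors_of_forall_le hσ ha hmax)
        (by simp [mem_predecessors])
    calc ∑ i ∈ insert a s, greedyVector f σ i
        = greedyVector f σ a + ∑ i ∈ s, greedyVector f σ i := sum_insert ha
      _ ≤ (f (insert a s) - f s) + (f s - f ∅) := add_le_add hgain ih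
      _ = f (insert a s) - f ∅ := sub_add_sub_cancel ..

theorem sum_greedyVector_eq_of_forall_le_mem (hσ : σ.Injective) {s : Finset V}
    (hs : ∀ ⦃i j⦄, σ i ≤ σ j → j ∈ s → i ∈ s) : ∑ i ∈ s, greedyVector f σ i = f s - f ∅ := by
  classical
  induction s using induction_on_max_value σ with
  | empty => simp
  | insert a s ha hmax ih =>
    have hs_eq : predecessors σ a = s := by
      refine Subset.antisymm (fun j hj ↦ ?_) (subset_predecessors_of_forall_le hσ ha hmax)
      have hja : σ j < σ a := mem_predecessors.mp hj
      exact mem_of_mem_insert_of_ne (hs hja.le (mem_insert_self a s)) (ne_of_apply_ne σ hja.ne)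
    have hs_lower : ∀ ⦃i j⦄, σ i ≤ σ j → j ∈ s → i ∈ s := fun i j hij hj ↦ by
      rw [← hs_eq, mem_predecessors] at hj ⊢
      exact hij.trans_lt hj
    calc ∑ i ∈ insert a s, greedyVector f σ i
        = greedyVector f σ a + ∑ i ∈ s, greedyVector f σ i := sum_insert ha
      _ = (f (insert a s) - f s) + (f s - f ∅) := by
        rw [greedyVector_eq_insert_sub hσ, hs_eq, ih hs_lower]
      _ = f (insert a s) - f ∅ := sub_add_sub_cancel ..

theorem greedy_in_core_general [DecidableEq V] [Preorder G] [IsOrderedAddMonoid G]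
    (hf : IsSubmodular f) (hσ : σ.Injective) :
    (∀ s : Finset V, ∑ i ∈ s, greedyVector f σ i ≤ f s - f ∅) ∧
      ∑ i, greedyVector f σ i = f univ - f ∅ :=
  ⟨sum_greedyVector_le hf hσ, sum_greedyVector_eq_of_forall_le_mem hσ fun i _ _ _ ↦ mem_univ i⟩

end Greedy

/-- Edmonds' greedy algorithm: for a normalized submodular `f` and an enumeration
`σ : V ≃ Fin n` of the players, the greedy vector
`r i = f({j : σ j ≤ σ i}) − f({j : σ j < σ i})` lies in the core `B(f)`. -/
theorem greedy_in_core
    {V : Type*} [Fintype V] [DecidableEq V] [Nonempty V]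
    (f : Finset V → ℝ)
    (hnorm : f ∅ = 0)
    (hsub : ∀ X Y : Finset V, f (X ∩ Y) + f (X ∪ Y) ≤ f X + f Y)
    (σ : V ≃ Fin (Fintype.card V)) (r : V → ℝ)
    (hr : ∀ i : V,
      r i = f (Finset.univ.filter fun j => σ j ≤ σ i)
            - f (Finset.univ.filter fun j => σ j < σ i)) :
    (∀ X : Finset V, ∑ i ∈ X, r i ≤ f X) ∧ ∑ i, r i = f Finset.univ := by
  obtain rfl : r = greedyVector f σ := funext hr
  simpa only [hnorm, sub_zero] using greedy_in_core_general (f := f) hsub σ.injective
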